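/- Let q(p) = p⁴ + p² + 1 and define H = q·q'' − (3/4)(q')², T = q²·q''' − (3/2)·q·q'·q'' + (3/4)(q')³, and V = q³·q'''' − q²·q'·q''' + (3/4)·q·(q')²·q'' − (9/32)(q')⁴. Then for every real p with H(p) ≠ 0: T₁(p) := T(p)²/H(p)³ = 324p²(p⁴ − 1)²/(2p⁴ + 11p² + 2)³ and T₂(p) := V(p)/H(p)² = 3(16p⁸ + 20p⁶ + 9p⁴ + 20p² + 16)/(2(2p⁴ + 11p² + 2)²), and these satisfy the cubic relation 9800·T₂³ − 19773·T₁² + 79092·T₁·T₂ − 64392·T₂² − 13182·T₁ + 33714·T₂ − 972 = 0. -/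

import Mathlib

/-- The inhomogeneous counterpart q(p) = p⁴ + p² + 1 of the binary quartic
x⁴ + x²y² + y⁴. -/
noncomputable def q19 : ℝ → ℝ := fun p => p ^ 4 + p ^ 2 + 1

/-- H = q·q'' − (3/4)(q')². -/
noncomputable def H19 (p : ℝ) : ℝ :=
  q19 p * deriv (deriv q19) p - (3 / 4) * (deriv q19 p) ^ 2

/-- T = q²·q''' − (3/2)·q·q'·q'' + (3/4)(q')³. -/
noncomputable def T19 (p : ℝ) : ℝ :=
  q19 p ^ 2 * deriv (deriv (deriv q19)) p -
    (3 / 2) * q19 p * deriv q19 p * deriv (deriv q19) p +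
    (3 / 4) * (deriv q19 p) ^ 3

/-- V = q³·q'''' − q²·q'·q''' + (3/4)·q·(q')²·q'' − (9/32)(q')⁴. -/
noncomputable def V19 (p : ℝ) : ℝ :=
  q19 p ^ 3 * deriv (deriv (deriv (deriv q19))) p -
    q19 p ^ 2 * deriv q19 p * deriv (deriv (deriv q19)) p +
    (3 / 4) * q19 p * (deriv q19 p) ^ 2 * deriv (deriv q19) p -
    (9 / 32) * (deriv q19 p) ^ 4

theorem deriv_q19 : deriv q19 = fun p => 4 * p ^ 3 + 2 * p := by
  funext p
  have h := ((hasDerivAt_pow 4 p).add (hasDerivAt_pow 2 p)).add_const 1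
  refine h.deriv.trans ?_
  push_cast
  ring

theorem deriv_deriv_q19 : deriv (deriv q19) = fun p => 12 * p ^ 2 + 2 := by
  rw [deriv_q19]
  funext p
  have h := ((hasDerivAt_pow 3 p).const_mul 4).add ((hasDerivAt_id' p).const_mul 2)
  refine h.deriv.trans ?_
  push_cast
  ring

theorem deriv_deriv_deriv_q19 : deriv (deriv (deriv q19)) = fun p => 24 * p := by
  rw [deriv_deriv_q19]
  funext p
  have h := ((hasDerivAt_pow 2 p).const_mul 12).add_const 2
  refine h.deriv.trans ?_
  push_cast
  ring

theorem deriv_deriv_deriv_deriv_q19 :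
    deriv (deriv (deriv (deriv q19))) = fun _ => 24 := by
  rw [deriv_deriv_deriv_q19]
  funext p
  have h := (hasDerivAt_id' p).const_mul 24
  exact h.deriv.trans (mul_one _)

theorem H19_eq (p : ℝ) : H19 p = 2 * p ^ 4 + 11 * p ^ 2 + 2 := by
  rw [H19, deriv_deriv_q19, deriv_q19, q19]
  ring

theorem T19_eq (p : ℝ) : T19 p = 18 * p * (1 - p ^ 4) := by
  rw [T19, deriv_deriv_deriv_q19, deriv_deriv_q19, deriv_q19, q19]
  ring

theorem V19_eq (p : ℝ) :
    V19 p = 3 / 2 * (16 * p ^ 8 + 20 * p ^ 6 + 9 * p ^ 4 + 20 * p ^ 2 + 16) := by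
  rw [V19, deriv_deriv_deriv_deriv_q19, deriv_deriv_deriv_q19, deriv_deriv_q19, deriv_q19, q19]
  ring

/-- The signature of the binary quartic x⁴ + x²y² + y⁴: explicit parametrization of
the classifying invariants (T₁, T₂) = (T²/H³, V/H²) and the cubic signature relation. -/
theorem stmt_19 (p : ℝ) (hH : H19 p ≠ 0) :
    T19 p ^ 2 / H19 p ^ 3 =
      324 * p ^ 2 * (p ^ 4 - 1) ^ 2 / (2 * p ^ 4 + 11 * p ^ 2 + 2) ^ 3 ∧
    V19 p / H19 p ^ 2 =
      3 * (16 * p ^ 8 + 20 * p ^ 6 + 9 * p ^ 4 + 20 * p ^ 2 + 16) /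
        (2 * (2 * p ^ 4 + 11 * p ^ 2 + 2) ^ 2) ∧
    9800 * (V19 p / H19 p ^ 2) ^ 3 - 19773 * (T19 p ^ 2 / H19 p ^ 3) ^ 2 +
        79092 * (T19 p ^ 2 / H19 p ^ 3) * (V19 p / H19 p ^ 2) -
        64392 * (V19 p / H19 p ^ 2) ^ 2 - 13182 * (T19 p ^ 2 / H19 p ^ 3) +
        33714 * (V19 p / H19 p ^ 2) - 972 = 0 := by
  rw [H19_eq, T19_eq, V19_eq]
  refine ⟨?_, ?_, ?_⟩
  · ring
  · field_simp
  · field_simp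
    ring
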